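/- For every edge colouring of the complete graph K₅ with at most 2 colours, there exists a small automorphism of K₅ that is preserved by the colouring. Consequently the small list distinguishing index of K₅ is greater than 2 (and hence D'_{l,s}(K₅) = 3). -/

import Mathlib

/-!
A colouring of the edges of `K₅` with two colours is a graph on five vertices together with its
complement, and every graph on five vertices has a nontrivial automorphism: the smallest
asymmetric graphs have six vertices. In fact one can always find an involution, that is, a
transposition or a product of two disjoint transpositions, and this is checked over all `2 ^ 10`
colourings in `exists_involution`. Every nontrivial permutation of the vertices is a small
automorphism of `K₅`, as distinct vertices are adjacent. The claim about lists follows by giving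
every edge the list of both colours.
-/

/-- The symmetric matrix of colours of an edge colouring of `K₅`, with argument `pij` for the
colour of the edge `{i, j}`; the diagonal entries are irrelevant. -/
def colourMatrix (p01 p02 p03 p04 p12 p13 p14 p23 p24 p34 : Fin 2) : Fin 5 → Fin 5 → Fin 2 :=
  ![![0, p01, p02, p03, p04], ![p01, 0, p12, p13, p14], ![p02, p12, 0, p23, p24],
    ![p03, p13, p23, 0, p34], ![p04, p14, p24, p34, 0]]

/-- The involutions of `Fin 5`, as vectors of images: the 10 transpositions, followed by the 15
products of two disjoint transpositions. -/
def involutions : List (Fin 5 → Fin 5) :=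
  [![0, 1, 2, 4, 3], ![0, 1, 3, 2, 4], ![0, 1, 4, 3, 2], ![0, 2, 1, 3, 4], ![0, 3, 2, 1, 4],
    ![0, 4, 2, 3, 1], ![1, 0, 2, 3, 4], ![2, 1, 0, 3, 4], ![3, 1, 2, 0, 4], ![4, 1, 2, 3, 0],
    ![0, 2, 1, 4, 3], ![0, 3, 4, 1, 2], ![0, 4, 3, 2, 1], ![1, 0, 2, 4, 3], ![1, 0, 3, 2, 4],
    ![1, 0, 4, 3, 2], ![2, 1, 0, 4, 3], ![2, 3, 0, 1, 4], ![2, 4, 0, 3, 1], ![3, 1, 4, 0, 2],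
    ![3, 2, 1, 0, 4], ![3, 4, 2, 0, 1], ![4, 1, 3, 2, 0], ![4, 2, 1, 3, 0], ![4, 3, 2, 1, 0]]

lemma involutions_spec : ∀ f ∈ involutions, (∀ v, f (f v) = v) ∧ ∃ v, v ≠ f v := by
  simp [involutions, Fin.forall_fin_succ, Fin.exists_fin_succ]

lemma exists_involution : ∀ p01 p02 p03 p04 p12 p13 p14 p23 p24 p34 : Fin 2,
    ∃ f ∈ involutions, ∀ u v : Fin 5, u < v →
      colourMatrix p01 p02 p03 p04 p12 p13 p14 p23 p24 p34 u v =
        colourMatrix p01 p02 p03 p04 p12 p13 p14 p23 p24 p34 (f u) (f v) := by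
  -- `simp` also expands the quantifiers over the colours, since these range over `Fin 2`.
  simp [involutions, colourMatrix, Fin.forall_fin_succ]

/-- Every 2-colouring of the edges of `K₅` is preserved by a small automorphism. -/
lemma exists_small_preserving (c : Sym2 (Fin 5) → Fin 2) :
    ∃ φ : (⊤ : SimpleGraph (Fin 5)) ≃g (⊤ : SimpleGraph (Fin 5)),
      (∃ v, (⊤ : SimpleGraph (Fin 5)).Adj v (φ v)) ∧
      ∀ u v : Fin 5, (⊤ : SimpleGraph (Fin 5)).Adj u v → c s(u, v) = c s(φ u, φ v) := by
  obtain ⟨f, hf, h⟩ := exists_involution (c s(0, 1)) (c s(0, 2)) (c s(0, 3)) (c s(0, 4))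
    (c s(1, 2)) (c s(1, 3)) (c s(1, 4)) (c s(2, 3)) (c s(2, 4)) (c s(3, 4))
  have hM : ∀ u v : Fin 5, u ≠ v →
      colourMatrix (c s(0, 1)) (c s(0, 2)) (c s(0, 3)) (c s(0, 4))
        (c s(1, 2)) (c s(1, 3)) (c s(1, 4)) (c s(2, 3)) (c s(2, 4)) (c s(3, 4)) u v =
      c s(u, v) := by
    intro u v huv
    fin_cases u <;> fin_cases v <;>
      first
      | exact absurd rfl huv
      | rfl
      | exact congrArg c Sym2.eq_swap
  obtain ⟨hinv, w, hw⟩ := involutions_spec f hf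
  let σ : Equiv.Perm (Fin 5) := Function.Involutive.toPerm f hinv
  have key : ∀ u v : Fin 5, u < v → c s(u, v) = c s(σ u, σ v) := fun u v huv => by
    rw [← hM u v huv.ne, ← hM _ _ (σ.injective.ne huv.ne)]
    exact h u v huv
  refine ⟨⟨σ, by simp⟩, ⟨w, hw⟩, fun u v huv => ?_⟩
  rcases lt_or_gt_of_ne huv.ne with hlt | hlt
  · exact key u v hlt
  · rw [Sym2.eq_swap, key v u hlt, Sym2.eq_swap]
    rfl

/-- Sharpness for K₅: every edge colouring with at most 2 colours preserves some small
automorphism; consequently lists of length 2 never suffice, i.e. `D'_{l,s}(K₅) > 2`. -/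
theorem stmt_7 :
    (∀ c : Sym2 (Fin 5) → Fin 2,
      ∃ φ : ((⊤ : SimpleGraph (Fin 5))) ≃g ((⊤ : SimpleGraph (Fin 5))),
        (∃ v, ((⊤ : SimpleGraph (Fin 5))).Adj v (φ v)) ∧
        ∀ u v : Fin 5, ((⊤ : SimpleGraph (Fin 5))).Adj u v → c s(u, v) = c s(φ u, φ v)) ∧
    ¬ (∀ (C : Type) (L : Sym2 (Fin 5) → Finset C),
        (∀ e ∈ ((⊤ : SimpleGraph (Fin 5))).edgeSet, (L e).card = 2) →
        ∃ c : Sym2 (Fin 5) → C,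
          (∀ e ∈ ((⊤ : SimpleGraph (Fin 5))).edgeSet, c e ∈ L e) ∧
          ∀ φ : ((⊤ : SimpleGraph (Fin 5))) ≃g ((⊤ : SimpleGraph (Fin 5))), (∃ v, ((⊤ : SimpleGraph (Fin 5))).Adj v (φ v)) →
            ∃ u v, ((⊤ : SimpleGraph (Fin 5))).Adj u v ∧ c s(u, v) ≠ c s(φ u, φ v)) := by
  refine ⟨exists_small_preserving, fun H => ?_⟩
  obtain ⟨c, -, hc⟩ := H (Fin 2) (fun _ => Finset.univ) (fun _ _ => by simp)
  obtain ⟨φ, hφ, hpres⟩ := exists_small_preserving c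
  obtain ⟨u, v, huv, hne⟩ := hc φ hφ
  exact hne (hpres u v huv)
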